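/- Define C_{GN,2d} := inf{ ‖u‖_{L²(ℝ²)}² ‖∇u‖_{L²(ℝ²)}² / ‖u‖_{L⁴(ℝ²)}⁴ : u ∈ H¹(ℝ²), u ≠ 0 } and C_{GN,rs} := inf{ (Σ_{j∈ℤ} ‖u_j‖_{L²}²)(Σ_{j∈ℤ} ‖∇u_j‖_{L²}²) / I(u) : (u_j)_{j∈ℤ} a family in H¹(ℝ²) with Σ_{j∈ℤ}(‖u_j‖_{L²}² + ‖∇u_j‖_{L²}²) < ∞ and I(u) ≠ 0 }, where I(u) := ∫_{ℝ²} (Σ_{i∈ℤ} |u_i|²)² dx + Σ_{j∈ℤ} ∫_{ℝ²} (Σ_{i≠j} |u_i|²) |u_j|² dx. Then C_{GN,rs} = ½ · C_{GN,2d}. -/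

import Mathlib

open MeasureTheory
open scoped ENNReal

noncomputable section

/-- The underlying Euclidean space `ℝ²`. -/
abbrev R2 : Type := EuclideanSpace ℝ (Fin 2)

/-- The pointwise norm of the gradient of `u : ℝ² → ℂ`. -/
def gradNorm (u : R2 → ℂ) (x : R2) : ℝ := ‖fderiv ℝ u x‖

/-- `u ∈ H¹(ℝ²)`: `u` is differentiable, `u ∈ L²(ℝ²)` and `∇u ∈ L²(ℝ²)`. -/
def IsH1 (u : R2 → ℂ) : Prop :=
  Differentiable ℝ u ∧ MemLp u 2 volume ∧ MemLp (gradNorm u) 2 volume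

/-- The sharp 2D Gagliardo–Nirenberg (Weinstein) constant
`C_{GN,2d} = inf ‖u‖₂²‖∇u‖₂² / ‖u‖₄⁴` over nonzero `u ∈ H¹(ℝ²)`. -/
def CGN2d : ℝ≥0∞ :=
  ⨅ u ∈ {u : R2 → ℂ | IsH1 u ∧ ¬ u =ᵐ[volume] (0 : R2 → ℂ)},
    eLpNorm u 2 volume ^ (2 : ℕ) * eLpNorm (gradNorm u) 2 volume ^ (2 : ℕ) /
      eLpNorm u 4 volume ^ (4 : ℕ)

/-- The interaction nonlinearity of the large scale resonant system:
`I(u) = ∫ (Σᵢ |uᵢ|²)² dx + Σⱼ ∫ (Σ_{i≠j} |uᵢ|²)|uⱼ|² dx`. -/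
def Ifun (u : ℤ → R2 → ℂ) : ℝ≥0∞ :=
  (∫⁻ x, (∑' i : ℤ, (‖u i x‖₊ : ℝ≥0∞) ^ (2 : ℕ)) ^ (2 : ℕ) ∂volume) +
    ∑' j : ℤ, ∫⁻ x,
      (∑' i : ℤ, if i = j then 0 else (‖u i x‖₊ : ℝ≥0∞) ^ (2 : ℕ)) *
        (‖u j x‖₊ : ℝ≥0∞) ^ (2 : ℕ) ∂volume

/-- The Weinstein constant of the large scale resonant system:
`C_{GN,rs} = inf (Σ_j ‖u_j‖₂²)(Σ_j ‖∇u_j‖₂²) / I(u)` over all families `(u_j)_{j∈ℤ} ⊂ H¹(ℝ²)`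
with `Σ_j (‖u_j‖₂² + ‖∇u_j‖₂²) < ∞` and `I(u) ≠ 0`. -/
def CGNrs : ℝ≥0∞ :=
  ⨅ u ∈ {u : ℤ → R2 → ℂ | (∀ j, IsH1 (u j)) ∧
      (∑' j : ℤ, (eLpNorm (u j) 2 volume ^ (2 : ℕ) +
        eLpNorm (gradNorm (u j)) 2 volume ^ (2 : ℕ))) < ⊤ ∧ Ifun u ≠ 0},
    (∑' j : ℤ, eLpNorm (u j) 2 volume ^ (2 : ℕ)) *
      (∑' j : ℤ, eLpNorm (gradNorm (u j)) 2 volume ^ (2 : ℕ)) / Ifun u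

/-!
Write `ρ = ∑ᵢ |uᵢ|²`. Restoring the diagonal terms gives `I(u) + ∑ⱼ ‖uⱼ‖₄⁴ = 2 ∫ ρ²`, so
`I(u) ≤ 2 ∫ ρ²`. Expanding `∫ ρ²` into pairs and using Cauchy–Schwarz first in `x` and then in the
index, the scalar Gagliardo–Nirenberg inequality for each `uⱼ` yields
`C_{GN,2d} ∫ ρ² ≤ (∑ⱼ ‖uⱼ‖₂²)(∑ⱼ ‖∇uⱼ‖₂²)`, whence `C_{GN,2d} / 2 ≤ C_{GN,rs}`.

The bound `I(u) ≤ 2 ∫ ρ²` is asymptotically sharp: the family of `n` copies of `u` has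
`I = (2n² - n) ‖u‖₄⁴`, while the numerator of the quotient is `n² ‖u‖₂² ‖∇u‖₂²`. Letting `n → ∞`
gives the reverse inequality.
-/

section ENNRealLemmas

open Filter Topology

lemma le_of_forall_natCast_mul_le_add {a b c : ℝ≥0∞} (hc : c ≠ ∞)
    (h : ∀ n : ℕ, n * a ≤ n * b + c) : a ≤ b := by
  have hlim : Tendsto (fun n : ℕ ↦ b + c / n) atTop (𝓝 b) := by
    simpa using tendsto_const_nhds.add
      (ENNReal.Tendsto.const_div ENNReal.tendsto_nat_nhds_top (.inr hc))
  refine ge_of_tendsto hlim ((eventually_gt_atTop 0).mono fun n hn ↦ ?_)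
  have hn₀ : (n : ℝ≥0∞) ≠ 0 := by exact_mod_cast hn.ne'
  rw [← ENNReal.mul_le_mul_iff_right hn₀ (by finiteness), mul_add,
    ENNReal.mul_div_cancel hn₀ (by finiteness)]
  exact h n

lemma tsum_apply_indicator_const {ι M : Type*} [Zero M] {F : M → ℝ≥0∞} (hF : F 0 = 0)
    (s : Finset ι) (a : M) :
    ∑' i, F ((s : Set ι).indicator (fun _ ↦ a) i) = s.card * F a :=
  calc ∑' i, F ((s : Set ι).indicator (fun _ ↦ a) i)
      = ∑' i, (s : Set ι).indicator (fun _ ↦ F a) i :=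
        tsum_congr fun i ↦ (congrFun (Set.indicator_comp_of_zero hF) i).symm
    _ = ∑ _i ∈ s, F a := (sum_eq_tsum_indicator _ s).symm
    _ = s.card * F a := by rw [Finset.sum_const, nsmul_eq_mul]

end ENNRealLemmas

section CauchySchwarz

variable {α ι : Type*} [MeasurableSpace α] {μ : Measure α}

lemma sq_lintegral_mul_le {f g : α → ℝ≥0∞} (hf : AEMeasurable f μ) (hg : AEMeasurable g μ) :
    (∫⁻ x, f x * g x ∂μ) ^ 2 ≤ (∫⁻ x, f x ^ 2 ∂μ) * ∫⁻ x, g x ^ 2 ∂μ := by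
  have rpow_half_sq (t : ℝ≥0∞) : (t ^ (1 / 2 : ℝ)) ^ 2 = t := by
    rw [← ENNReal.rpow_natCast, ← ENNReal.rpow_mul]
    simp
  have holder := ENNReal.lintegral_mul_le_Lp_mul_Lq μ .two_two hf hg
  simpa only [Pi.mul_apply, mul_pow, rpow_half_sq, ENNReal.rpow_two]
    using pow_le_pow_left' holder 2

lemma mul_lintegral_mul_le {f g : α → ℝ≥0∞} (hf : AEMeasurable f μ) (hg : AEMeasurable g μ)
    {c a b : ℝ≥0∞} (hfa : c * ∫⁻ x, f x ^ 2 ∂μ ≤ a ^ 2) (hgb : c * ∫⁻ x, g x ^ 2 ∂μ ≤ b ^ 2) :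
    c * ∫⁻ x, f x * g x ∂μ ≤ a * b := by
  rw [← ENNReal.pow_le_pow_left_iff two_ne_zero]
  calc (c * ∫⁻ x, f x * g x ∂μ) ^ 2
      ≤ c ^ 2 * ((∫⁻ x, f x ^ 2 ∂μ) * ∫⁻ x, g x ^ 2 ∂μ) := by
        rw [mul_pow]
        gcongr
        exact sq_lintegral_mul_le hf hg
    _ = (c * ∫⁻ x, f x ^ 2 ∂μ) * (c * ∫⁻ x, g x ^ 2 ∂μ) := by ring
    _ ≤ a ^ 2 * b ^ 2 := mul_le_mul' hfa hgb
    _ = (a * b) ^ 2 := (mul_pow a b 2).symm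

lemma sq_tsum_mul_le (f g : ι → ℝ≥0∞) :
    (∑' i, f i * g i) ^ 2 ≤ (∑' i, f i ^ 2) * ∑' i, g i ^ 2 := by
  let _ : MeasurableSpace ι := ⊤
  simpa only [lintegral_count] using
    sq_lintegral_mul_le (μ := .count) measurable_from_top.aemeasurable
      (measurable_from_top (f := g)).aemeasurable

variable [Countable ι] {f : ι → α → ℝ≥0∞}

lemma lintegral_tsum_mul (hf : ∀ i, AEMeasurable (f i) μ) {g : α → ℝ≥0∞} (hg : AEMeasurable g μ) :
    ∫⁻ x, (∑' i, f i x) * g x ∂μ = ∑' i, ∫⁻ x, f i x * g x ∂μ := by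
  simp_rw [← ENNReal.tsum_mul_right]
  exact lintegral_tsum fun i ↦ (hf i).mul hg

lemma lintegral_sq_tsum (hf : ∀ i, AEMeasurable (f i) μ) :
    ∫⁻ x, (∑' i, f i x) ^ 2 ∂μ = ∑' j, ∫⁻ x, (∑' i, f i x) * f j x ∂μ := by
  simp_rw [sq, ← ENNReal.tsum_mul_left]
  exact lintegral_tsum fun j ↦ (AEMeasurable.tsum hf).mul (hf j)

lemma mul_lintegral_sq_tsum_le (hf : ∀ i, AEMeasurable (f i) μ) {c : ℝ≥0∞} {a b : ι → ℝ≥0∞}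
    (h : ∀ i, c * ∫⁻ x, f i x ^ 2 ∂μ ≤ a i ^ 2 * b i ^ 2) :
    c * ∫⁻ x, (∑' i, f i x) ^ 2 ∂μ ≤ (∑' i, a i ^ 2) * ∑' i, b i ^ 2 := by
  calc c * ∫⁻ x, (∑' i, f i x) ^ 2 ∂μ
      = ∑' j, ∑' i, c * ∫⁻ x, f i x * f j x ∂μ := by
        simp_rw [lintegral_sq_tsum hf, lintegral_tsum_mul hf (hf _), ENNReal.tsum_mul_left]
    _ ≤ ∑' j, ∑' i, a i * b i * (a j * b j) :=
        ENNReal.tsum_le_tsum fun j ↦ ENNReal.tsum_le_tsum fun i ↦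
          mul_lintegral_mul_le (hf i) (hf j) ((h i).trans_eq (mul_pow ..).symm)
            ((h j).trans_eq (mul_pow ..).symm)
    _ = (∑' i, a i * b i) ^ 2 := by
        simp_rw [ENNReal.tsum_mul_right, ENNReal.tsum_mul_left, sq]
    _ ≤ (∑' i, a i ^ 2) * ∑' i, b i ^ 2 := sq_tsum_mul_le a b

end CauchySchwarz

section Interaction

variable {α ι : Type*} [MeasurableSpace α] [DecidableEq ι]

/-- The interaction `∫ (∑ᵢ fᵢ)² + ∑ⱼ ∫ (∑_{i ≠ j} fᵢ) fⱼ` of a family of densities `fᵢ ≥ 0`; the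
functional `Ifun u` is its value at `fᵢ = |uᵢ|²`. -/
def interaction (μ : Measure α) (f : ι → α → ℝ≥0∞) : ℝ≥0∞ :=
  ∫⁻ x, (∑' i, f i x) ^ 2 ∂μ + ∑' j, ∫⁻ x, (∑' i, if i = j then 0 else f i x) * f j x ∂μ

variable {μ : Measure α} {f : ι → α → ℝ≥0∞}

lemma lintegral_sq_tsum_le_interaction : ∫⁻ x, (∑' i, f i x) ^ 2 ∂μ ≤ interaction μ f :=
  le_self_add

variable [Countable ι]

lemma interaction_add_tsum_lintegral_sq (hf : ∀ i, AEMeasurable (f i) μ) :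
    interaction μ f + ∑' j, ∫⁻ x, f j x ^ 2 ∂μ = 2 * ∫⁻ x, (∑' i, f i x) ^ 2 ∂μ := by
  have restore_diagonal (j : ι) (x : α) :
      (∑' i, if i = j then 0 else f i x) * f j x + f j x ^ 2 = (∑' i, f i x) * f j x := by
    have hsum : ∑' i, f i x = f j x + ∑' i, if i = j then 0 else f i x := by
      convert ENNReal.tsum_eq_add_tsum_ite j
    rw [hsum]
    ring
  rw [interaction, add_assoc, ← ENNReal.tsum_add, two_mul]
  congr 1
  rw [lintegral_sq_tsum hf]
  refine tsum_congr fun j ↦ ?_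
  rw [← lintegral_add_right' _ ((hf j).pow_const 2)]
  exact lintegral_congr (restore_diagonal j)

lemma interaction_le_two_mul (hf : ∀ i, AEMeasurable (f i) μ) :
    interaction μ f ≤ 2 * ∫⁻ x, (∑' i, f i x) ^ 2 ∂μ :=
  le_self_add.trans_eq (interaction_add_tsum_lintegral_sq hf)

end Interaction

section Copies

variable {α ι : Type*} [MeasurableSpace α] {μ : Measure α} {f : α → ℝ≥0∞}

lemma lintegral_sq_tsum_indicator_const (s : Finset ι) (hf : AEMeasurable f μ) :
    ∫⁻ x, (∑' i, (s : Set ι).indicator (fun _ ↦ f) i x) ^ 2 ∂μ =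
      s.card ^ 2 * ∫⁻ x, f x ^ 2 ∂μ := by
  have sum_copies (x : α) : ∑' i, (s : Set ι).indicator (fun _ ↦ f) i x = s.card * f x :=
    tsum_apply_indicator_const (F := fun g : α → ℝ≥0∞ ↦ g x) rfl s f
  simp_rw [sum_copies, mul_pow]
  exact lintegral_const_mul'' _ (hf.pow_const 2)

variable [DecidableEq ι] [Countable ι]

lemma interaction_indicator_const_add (s : Finset ι) (hf : AEMeasurable f μ) :
    interaction μ ((s : Set ι).indicator fun _ ↦ f) + s.card * ∫⁻ x, f x ^ 2 ∂μ =
      2 * (s.card ^ 2 * ∫⁻ x, f x ^ 2 ∂μ) := by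
  have hcopies (i : ι) : AEMeasurable ((s : Set ι).indicator (fun _ ↦ f) i) μ := by
    rcases Set.indicator_eq_zero_or_self (s : Set ι) (fun _ ↦ f) i with hi | hi <;> rw [hi]
    exacts [aemeasurable_zero, hf]
  rw [← lintegral_sq_tsum_indicator_const s hf, ← interaction_add_tsum_lintegral_sq hcopies,
    tsum_apply_indicator_const (F := fun g : α → ℝ≥0∞ ↦ ∫⁻ x, g x ^ 2 ∂μ) (by simp) s f]

lemma two_mul_mul_lintegral_sq_le_of_interaction_le [Infinite ι] (hf : AEMeasurable f μ)
    {c a : ℝ≥0∞} (ha : a ≠ ∞)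
    (h : ∀ s : Finset ι, c * interaction μ ((s : Set ι).indicator fun _ ↦ f) ≤ s.card ^ 2 * a) :
    2 * (c * ∫⁻ x, f x ^ 2 ∂μ) ≤ a := by
  set J := ∫⁻ x, f x ^ 2 ∂μ
  have hcJ : c * J ≠ ∞ := by
    obtain ⟨i⟩ := (inferInstance : Nonempty ι)
    refine ne_top_of_le_ne_top ha ?_
    calc c * J
        = c * ∫⁻ x, (∑' j, (({i} : Finset ι) : Set ι).indicator (fun _ ↦ f) j x) ^ 2 ∂μ := by
          rw [lintegral_sq_tsum_indicator_const {i} hf, Finset.card_singleton, Nat.cast_one,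
            one_pow, one_mul]
      _ ≤ c * interaction μ ((({i} : Finset ι) : Set ι).indicator fun _ ↦ f) := by
          gcongr
          exact lintegral_sq_tsum_le_interaction
      _ ≤ a := by simpa only [Finset.card_singleton, Nat.cast_one, one_pow, one_mul] using h {i}
  refine le_of_forall_natCast_mul_le_add hcJ fun n ↦ ?_
  rcases eq_or_ne n 0 with rfl | hn
  · simp
  obtain ⟨s, rfl⟩ := Infinite.exists_subset_card_eq ι n
  rw [← ENNReal.mul_le_mul_iff_right (Nat.cast_ne_zero.2 hn) (ENNReal.natCast_ne_top _)]
  calc s.card * (s.card * (2 * (c * J)))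
      = c * (2 * (s.card ^ 2 * J)) := by ring
    _ = c * interaction μ ((s : Set ι).indicator fun _ ↦ f) + c * (s.card * J) := by
        rw [← interaction_indicator_const_add s hf, mul_add]
    _ ≤ s.card ^ 2 * a + c * (s.card * J) := add_le_add_left (h s) _
    _ = s.card * (s.card * a + c * J) := by ring

end Copies

section GagliardoNirenberg

lemma eLpNorm_natCast_pow {α ε : Type*} [MeasurableSpace α] [ENorm ε] {n : ℕ} (hn : n ≠ 0)
    (u : α → ε) (μ : Measure α) : eLpNorm u n μ ^ n = ∫⁻ x, ‖u x‖ₑ ^ n ∂μ := by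
  simpa only [NNReal.coe_natCast, ENNReal.coe_natCast, ENNReal.rpow_natCast] using
    eLpNorm_nnreal_pow_eq_lintegral (f := u) (μ := μ) (Nat.cast_ne_zero.2 hn)

lemma gradNorm_zero : gradNorm 0 = 0 := by
  ext x
  simp [gradNorm]

namespace IsH1

variable {u : R2 → ℂ}

lemma zero : IsH1 0 :=
  ⟨differentiable_const 0, .zero, gradNorm_zero ▸ .zero⟩

lemma aemeasurable_enorm_sq (hu : IsH1 u) : AEMeasurable (fun x ↦ ‖u x‖ₑ ^ 2) :=
  hu.2.1.1.enorm.pow_const 2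

lemma eLpNorm_sq_ne_top (hu : IsH1 u) : eLpNorm u 2 volume ^ 2 ≠ ∞ :=
  ENNReal.pow_ne_top hu.2.1.2.ne

lemma eLpNorm_gradNorm_sq_ne_top (hu : IsH1 u) : eLpNorm (gradNorm u) 2 volume ^ 2 ≠ ∞ :=
  ENNReal.pow_ne_top hu.2.2.2.ne

end IsH1

lemma le_CGN2d_iff {c : ℝ≥0∞} :
    c ≤ CGN2d ↔ ∀ u, IsH1 u →
      c * ∫⁻ x, (‖u x‖ₑ ^ 2) ^ 2 ≤ eLpNorm u 2 volume ^ 2 * eLpNorm (gradNorm u) 2 volume ^ 2 := by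
  have hL4 (u : R2 → ℂ) : ∫⁻ x, (‖u x‖ₑ ^ 2) ^ 2 = eLpNorm u 4 volume ^ 4 := by
    simp_rw [← pow_mul]
    exact (eLpNorm_natCast_pow four_ne_zero u volume).symm
  simp_rw [CGN2d, le_iInf_iff, hL4]
  refine forall_congr' fun u ↦ ⟨fun h hu ↦ ?_, fun h ⟨hu, hu₀⟩ ↦ ?_⟩
  · by_cases hu₀ : u =ᵐ[volume] 0
    · simp [eLpNorm_congr_ae hu₀]
    · exact ENNReal.mul_le_of_le_div (h ⟨hu, hu₀⟩)
  · have hne : eLpNorm u 4 volume ^ 4 ≠ 0 :=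
      pow_ne_zero _ (mt (eLpNorm_eq_zero_iff hu.2.1.1 four_ne_zero).1 hu₀)
    have hfin := ENNReal.mul_ne_top hu.eLpNorm_sq_ne_top hu.eLpNorm_gradNorm_sq_ne_top
    exact (ENNReal.le_div_iff_mul_le (.inl hne) (.inr hfin)).2 (h hu)

lemma le_CGNrs_iff {c : ℝ≥0∞} :
    c ≤ CGNrs ↔ ∀ u : ℤ → R2 → ℂ, (∀ j, IsH1 (u j)) →
      ∑' j, (eLpNorm (u j) 2 volume ^ 2 + eLpNorm (gradNorm (u j)) 2 volume ^ 2) < ∞ →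
      c * Ifun u ≤
        (∑' j, eLpNorm (u j) 2 volume ^ 2) * ∑' j, eLpNorm (gradNorm (u j)) 2 volume ^ 2 := by
  simp_rw [CGNrs, le_iInf_iff]
  refine forall_congr' fun u ↦ ⟨fun h hu hsum ↦ ?_, fun h ⟨hu, hsum, hne⟩ ↦ ?_⟩
  · by_cases hI : Ifun u = 0
    · simp [hI]
    · exact ENNReal.mul_le_of_le_div (h ⟨hu, hsum, hI⟩)
  · have hfin := hsum.ne
    rw [ENNReal.tsum_add, ENNReal.add_ne_top] at hfin
    exact (ENNReal.le_div_iff_mul_le (.inl hne) (.inr (ENNReal.mul_ne_top hfin.1 hfin.2))).2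
      (h hu hsum)

lemma Ifun_eq_interaction (u : ℤ → R2 → ℂ) :
    Ifun u = interaction volume fun i x ↦ ‖u i x‖ₑ ^ 2 :=
  rfl

lemma Ifun_indicator_const (s : Finset ℤ) (u : R2 → ℂ) :
    Ifun ((s : Set ℤ).indicator fun _ ↦ u) =
      interaction volume ((s : Set ℤ).indicator fun _ x ↦ ‖u x‖ₑ ^ 2) := by
  rw [Ifun_eq_interaction]
  congr 1
  exact (Set.indicator_comp_of_zero (f := fun _ ↦ u) (g := fun v x ↦ ‖v x‖ₑ ^ 2)
    (funext fun x ↦ by simp)).symm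

lemma mul_Ifun_le_of_two_mul_le_CGN2d {c : ℝ≥0∞} (hc : 2 * c ≤ CGN2d) {u : ℤ → R2 → ℂ}
    (hu : ∀ j, IsH1 (u j)) :
    c * Ifun u ≤
      (∑' j, eLpNorm (u j) 2 volume ^ 2) * ∑' j, eLpNorm (gradNorm (u j)) 2 volume ^ 2 := by
  have hmeas (j : ℤ) : AEMeasurable (fun x ↦ ‖u j x‖ₑ ^ 2) := (hu j).aemeasurable_enorm_sq
  calc c * Ifun u
      ≤ c * (2 * ∫⁻ x, (∑' j, ‖u j x‖ₑ ^ 2) ^ 2) := by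
        rw [Ifun_eq_interaction]
        gcongr
        exact interaction_le_two_mul hmeas
    _ = 2 * c * ∫⁻ x, (∑' j, ‖u j x‖ₑ ^ 2) ^ 2 := by ring
    _ ≤ (∑' j, eLpNorm (u j) 2 volume ^ 2) * ∑' j, eLpNorm (gradNorm (u j)) 2 volume ^ 2 :=
        mul_lintegral_sq_tsum_le (a := fun j ↦ eLpNorm (u j) 2 volume)
          (b := fun j ↦ eLpNorm (gradNorm (u j)) 2 volume) hmeas
          fun j ↦ le_CGN2d_iff.1 hc (u j) (hu j)

lemma mul_Ifun_indicator_const_le {c : ℝ≥0∞} (hc : c ≤ CGNrs) {u : R2 → ℂ} (hu : IsH1 u)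
    (s : Finset ℤ) :
    c * Ifun ((s : Set ℤ).indicator fun _ ↦ u) ≤
      s.card ^ 2 * (eLpNorm u 2 volume ^ 2 * eLpNorm (gradNorm u) 2 volume ^ 2) := by
  have hmass : ∑' j, eLpNorm ((s : Set ℤ).indicator (fun _ ↦ u) j) 2 volume ^ 2 =
      s.card * eLpNorm u 2 volume ^ 2 :=
    tsum_apply_indicator_const (F := fun v : R2 → ℂ ↦ eLpNorm v 2 volume ^ 2) (by simp) s u
  have henergy : ∑' j, eLpNorm (gradNorm ((s : Set ℤ).indicator (fun _ ↦ u) j)) 2 volume ^ 2 =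
      s.card * eLpNorm (gradNorm u) 2 volume ^ 2 :=
    tsum_apply_indicator_const (F := fun v ↦ eLpNorm (gradNorm v) 2 volume ^ 2)
      (by simp [gradNorm_zero]) s u
  have hH1 (j : ℤ) : IsH1 ((s : Set ℤ).indicator (fun _ ↦ u) j) := by
    rcases Set.indicator_eq_zero_or_self (s : Set ℤ) (fun _ ↦ u) j with hj | hj <;> rw [hj]
    exacts [.zero, hu]
  have hfin : ∑' j, (eLpNorm ((s : Set ℤ).indicator (fun _ ↦ u) j) 2 volume ^ 2 +
      eLpNorm (gradNorm ((s : Set ℤ).indicator (fun _ ↦ u) j)) 2 volume ^ 2) < ∞ := by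
    rw [ENNReal.tsum_add, hmass, henergy]
    have := hu.eLpNorm_sq_ne_top
    have := hu.eLpNorm_gradNorm_sq_ne_top
    finiteness
  calc c * Ifun ((s : Set ℤ).indicator fun _ ↦ u)
      ≤ s.card * eLpNorm u 2 volume ^ 2 * (s.card * eLpNorm (gradNorm u) 2 volume ^ 2) := by
        simpa only [hmass, henergy] using le_CGNrs_iff.1 hc _ hH1 hfin
    _ = s.card ^ 2 * (eLpNorm u 2 volume ^ 2 * eLpNorm (gradNorm u) 2 volume ^ 2) := by ring

end GagliardoNirenberg

/-- Proposition 1.1 (large scale Gagliardo–Nirenberg inequality): `C_{GN,rs} = ½ C_{GN,2d}`. -/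
theorem large_scale_gagliardo_nirenberg : CGNrs = CGN2d / 2 := by
  refine eq_of_forall_le_iff fun c ↦ ?_
  rw [ENNReal.le_div_iff_mul_le (by simp) (by simp), mul_comm c 2]
  refine ⟨fun hc ↦ le_CGN2d_iff.2 fun u hu ↦ ?_,
    fun hc ↦ le_CGNrs_iff.2 fun u hu _ ↦ mul_Ifun_le_of_two_mul_le_CGN2d hc hu⟩
  have hfin := ENNReal.mul_ne_top hu.eLpNorm_sq_ne_top hu.eLpNorm_gradNorm_sq_ne_top
  rw [mul_assoc]
  refine two_mul_mul_lintegral_sq_le_of_interaction_le (ι := ℤ) hu.aemeasurable_enorm_sq hfin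
    fun s ↦ ?_
  rw [← Ifun_indicator_const]
  exact mul_Ifun_indicator_const_le hc hu s

end
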